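/- arXiv:1808.01923 — 9 statements merged into one kernel-verified Lean document; each statement's English description precedes it below -/
import Mathlib

section
/- Let eta_low_plus, eta_low_minus, eta_upp_plus, eta_upp_minus be real numbers and s a nonzero real number such that 0 ≤ eta_low_plus ≤ ‖s·e0 + s⁻¹·ε0‖_B ≤ eta_upp_plus and 0 ≤ eta_low_minus ≤ ‖s·e0 − s⁻¹·ε0‖_B ≤ eta_upp_minus. Then the modeling error in the quantity of interest is bounded above and below: (1/4)·eta_low_plus² − (1/4)·eta_upp_minus² + R(w0) ≤ Q(e0) ≤ (1/4)·eta_upp_plus² − (1/4)·eta_low_minus² + R(w0). -/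
/-! Since `B e0 w = Q e0` and `w = ε0 + w0`, one has `Q e0 = B e0 ε0 + R w0`: the residual at `w0`
is `B e0 w0`. Polarization writes `B e0 ε0` as a quarter of the difference of the squared energy
norms of `s • e0 ± s⁻¹ • ε0`, and the assumed bounds on these norms are squared. -/

/-- Two-sided computable bounds on the modeling error in the
quantity of interest `Q(e0)`. -/
theorem stmt_0
    {H : Type*} [NormedAddCommGroup H] [InnerProductSpace ℝ H]
    (B B0 : H →ₗ[ℝ] H →ₗ[ℝ] ℝ)
    (hBsymm : ∀ x y, B x y = B y x)
    (hBpos : ∀ v, v ≠ 0 → 0 < B v v)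
    (hB0symm : ∀ x y, B0 x y = B0 y x)
    (F Q : H →ₗ[ℝ] ℝ)
    (u u0 w w0 : H)
    (hu : ∀ v, B u v = F v)
    (hu0 : ∀ v, B0 u0 v = F v)
    (hw : ∀ v, B v w = Q v)
    (hw0 : ∀ v, B0 v w0 = Q v)
    (e0 ε0 : H) (he0 : e0 = u - u0) (hε0 : ε0 = w - w0)
    (R : H → ℝ) (hR : ∀ v, R v = F v - B u0 v)
    (s : ℝ) (hs : s ≠ 0)
    (ηlp ηlm ηup ηum : ℝ)
    (hlp0 : 0 ≤ ηlp) (hlm0 : 0 ≤ ηlm)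
    (hlp : ηlp ≤ Real.sqrt (B (s • e0 + s⁻¹ • ε0) (s • e0 + s⁻¹ • ε0)))
    (hup : Real.sqrt (B (s • e0 + s⁻¹ • ε0) (s • e0 + s⁻¹ • ε0)) ≤ ηup)
    (hlm : ηlm ≤ Real.sqrt (B (s • e0 - s⁻¹ • ε0) (s • e0 - s⁻¹ • ε0)))
    (hum : Real.sqrt (B (s • e0 - s⁻¹ • ε0) (s • e0 - s⁻¹ • ε0)) ≤ ηum) :
    (1 / 4) * ηlp ^ 2 - (1 / 4) * ηum ^ 2 + R w0 ≤ Q e0 ∧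
    Q e0 ≤ (1 / 4) * ηup ^ 2 - (1 / 4) * ηlm ^ 2 + R w0 := by
  have hnn : ∀ v, 0 ≤ B v v := fun v => by
    by_cases hv : v = 0
    · simp [hv]
    · exact (hBpos v hv).le
  have hQ : Q e0 = B e0 ε0 + R w0 := by
    rw [← hw e0, hR, ← hu w0, he0, hε0]
    simp only [map_sub, LinearMap.sub_apply]
    ring
  -- polarization: the factors `s` and `s⁻¹` cancel in the cross term
  have hpol : B (s • e0 + s⁻¹ • ε0) (s • e0 + s⁻¹ • ε0)
      - B (s • e0 - s⁻¹ • ε0) (s • e0 - s⁻¹ • ε0) = 4 * B e0 ε0 := by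
    simp only [map_sub, map_add, map_smul, LinearMap.sub_apply, LinearMap.add_apply,
      LinearMap.smul_apply, smul_eq_mul, hBsymm ε0 e0]
    field_simp
    ring
  have hp := Real.sq_sqrt (hnn (s • e0 + s⁻¹ • ε0))
  have hm := Real.sq_sqrt (hnn (s • e0 - s⁻¹ • ε0))
  have h1 := pow_le_pow_left₀ hlp0 hlp 2
  have h2 := pow_le_pow_left₀ (Real.sqrt_nonneg _) hup 2
  have h3 := pow_le_pow_left₀ hlm0 hlm 2
  have h4 := pow_le_pow_left₀ (Real.sqrt_nonneg _) hum 2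
  rw [hp] at h1 h2
  rw [hm] at h3 h4
  constructor <;> linarith
end

section
/- For every nonzero real number s, the error in the quantity of interest admits the exact decomposition Q(e0) = (1/4)·‖s·e0 + s⁻¹·ε0‖_B² − (1/4)·‖s·e0 − s⁻¹·ε0‖_B² + R(w0). -/
/-!
Testing the primal and adjoint equations against each other gives
`Q e0 = B e0 w = B e0 ε0 + B e0 w0`, and `B e0 w0` is the primal residual at `w0`. The term
`B e0 ε0 = B (s • e0) (s⁻¹ • ε0)` is then written as a difference of squared energy norms by
polarization of the symmetric form `B`.
-/

/-- Exact parallelogram-type decomposition of the error in the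
quantity of interest. -/
theorem stmt_1
    {H : Type*} [NormedAddCommGroup H] [InnerProductSpace ℝ H]
    (B B0 : H →ₗ[ℝ] H →ₗ[ℝ] ℝ)
    (hBsymm : ∀ x y, B x y = B y x)
    (hBpos : ∀ v, v ≠ 0 → 0 < B v v)
    (hB0symm : ∀ x y, B0 x y = B0 y x)
    (F Q : H →ₗ[ℝ] ℝ)
    (u u0 w w0 : H)
    (hu : ∀ v, B u v = F v)
    (hu0 : ∀ v, B0 u0 v = F v)
    (hw : ∀ v, B v w = Q v)
    (hw0 : ∀ v, B0 v w0 = Q v)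
    (e0 ε0 : H) (he0 : e0 = u - u0) (hε0 : ε0 = w - w0)
    (R : H → ℝ) (hR : ∀ v, R v = F v - B u0 v)
    (s : ℝ) (hs : s ≠ 0) :
    Q e0 =
      (1 / 4) * Real.sqrt (B (s • e0 + s⁻¹ • ε0) (s • e0 + s⁻¹ • ε0)) ^ 2 -
      (1 / 4) * Real.sqrt (B (s • e0 - s⁻¹ • ε0) (s • e0 - s⁻¹ • ε0)) ^ 2 +
      R w0 := by
  have hnonneg : ∀ v, 0 ≤ B v v := fun v => by
    by_cases hv : v = 0
    · simp [hv]
    · exact (hBpos v hv).le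
  rw [Real.sq_sqrt (hnonneg _), Real.sq_sqrt (hnonneg _)]
  have hRes : R w0 = B e0 w0 := by
    rw [hR, ← hu, he0, map_sub, LinearMap.sub_apply]
  have hQ : Q e0 = B e0 ε0 + R w0 := by
    rw [hRes, ← hw, hε0, map_sub, sub_add_cancel]
  -- Polarization of `B` at `s • e0`, `s⁻¹ • ε0`; the scalings cancel in the cross term.
  have hpol : B (s • e0 + s⁻¹ • ε0) (s • e0 + s⁻¹ • ε0) -
      B (s • e0 - s⁻¹ • ε0) (s • e0 - s⁻¹ • ε0) = 4 * B e0 ε0 := by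
    simp only [map_add, map_sub, map_smul, LinearMap.add_apply, LinearMap.sub_apply,
      LinearMap.smul_apply, smul_eq_mul, hBsymm ε0 e0]
    field_simp
    ring
  linarith
end

section
/- For every nonzero real number s and every φ ∈ H with φ ≠ 0, the computable quotient |s·R(φ) ± s⁻¹·R*(φ)| / ‖φ‖_B is a lower bound for the combined error norm: |s·R(φ) ± s⁻¹·R*(φ)| / ‖φ‖_B ≤ ‖s·e0 ± s⁻¹·ε0‖_B (both signs). -/
/-!
The residuals represent the errors in the energy inner product: `R φ = B e0 φ` and
`Rstar φ = B ε0 φ`, the latter by symmetry of `B`. Hence `s * R φ ± s⁻¹ * Rstar φ` is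
`B (s • e0 ± s⁻¹ • ε0) φ`, and the bound is Cauchy-Schwarz for `B`
(`abs_div_sqrt_le_sqrt`).
-/

/-- Cauchy-Schwarz for a symmetric positive definite form, in quotient form. -/
lemma abs_div_sqrt_le_sqrt {H : Type*} [AddCommGroup H] [Module ℝ H]
    (B : H →ₗ[ℝ] H →ₗ[ℝ] ℝ) (hBsymm : ∀ x y, B x y = B y x)
    (hBpos : ∀ v, v ≠ 0 → 0 < B v v) (x φ : H) (hφ : φ ≠ 0) :
    |B x φ| / Real.sqrt (B φ φ) ≤ Real.sqrt (B x x) := by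
  have hnonneg : ∀ v, 0 ≤ B v v := fun v => by
    rcases eq_or_ne v 0 with rfl | hv
    · simp
    · exact (hBpos v hv).le
  have hCS : B x φ ^ 2 ≤ B x x * B φ φ := by
    have h := LinearMap.BilinForm.apply_mul_apply_le_of_forall_zero_le B hnonneg x φ
    rwa [hBsymm φ x, ← sq] at h
  rw [div_le_iff₀ (Real.sqrt_pos.mpr (hBpos φ hφ)), ← Real.sqrt_mul (hnonneg x)]
  exact Real.abs_le_sqrt hCS

/-- Computable lower bounds on the combined error norms
(both signs). -/
theorem stmt_6
    {H : Type*} [NormedAddCommGroup H] [InnerProductSpace ℝ H]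
    (B B0 : H →ₗ[ℝ] H →ₗ[ℝ] ℝ)
    (hBsymm : ∀ x y, B x y = B y x)
    (hBpos : ∀ v, v ≠ 0 → 0 < B v v)
    (hB0symm : ∀ x y, B0 x y = B0 y x)
    (F Q : H →ₗ[ℝ] ℝ)
    (u u0 w w0 : H)
    (hu : ∀ v, B u v = F v)
    (hu0 : ∀ v, B0 u0 v = F v)
    (hw : ∀ v, B v w = Q v)
    (hw0 : ∀ v, B0 v w0 = Q v)
    (e0 ε0 : H) (he0 : e0 = u - u0) (hε0 : ε0 = w - w0)
    (R Rstar : H → ℝ)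
    (hR : ∀ v, R v = F v - B u0 v)
    (hRstar : ∀ v, Rstar v = Q v - B v w0)
    (s : ℝ) (hs : s ≠ 0) :
    ∀ φ : H, φ ≠ 0 →
      |s * R φ + s⁻¹ * Rstar φ| / Real.sqrt (B φ φ) ≤
        Real.sqrt (B (s • e0 + s⁻¹ • ε0) (s • e0 + s⁻¹ • ε0)) ∧
      |s * R φ - s⁻¹ * Rstar φ| / Real.sqrt (B φ φ) ≤
        Real.sqrt (B (s • e0 - s⁻¹ • ε0) (s • e0 - s⁻¹ • ε0)) := by
  intro φ hφ
  have hRe : R φ = B e0 φ := by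
    rw [hR, he0, ← hu, map_sub, LinearMap.sub_apply]
  have hRstare : Rstar φ = B ε0 φ := by
    rw [hRstar, hε0, ← hw, hBsymm (w - w0) φ, map_sub]
  constructor
  · simpa [hRe, hRstare] using
      abs_div_sqrt_le_sqrt B hBsymm hBpos (s • e0 + s⁻¹ • ε0) φ hφ
  · simpa [hRe, hRstare] using
      abs_div_sqrt_le_sqrt B hBsymm hBpos (s • e0 - s⁻¹ • ε0) φ hφ
end

section
/- Assume B0 is positive semidefinite (B0(v,v) ≥ 0 for all v) and the form difference D := B − B0 is positive semidefinite (D(v,v) ≥ 0 for all v). Then the energy norm of the primal modeling error is bounded by the computable quantity ζ_upp := √(D(u0,u0)): ‖u − u0‖_B ≤ √(D(u0,u0)). -/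
/-- Upper bound for the energy norm of the primal modeling error. -/
theorem stmt_7
    {H : Type*} [NormedAddCommGroup H] [InnerProductSpace ℝ H]
    (B B0 : H →ₗ[ℝ] H →ₗ[ℝ] ℝ)
    (hBsymm : ∀ x y, B x y = B y x)
    (hBpos : ∀ v, v ≠ 0 → 0 < B v v)
    (hB0symm : ∀ x y, B0 x y = B0 y x)
    (hB0psd : ∀ v, 0 ≤ B0 v v)
    (F : H →ₗ[ℝ] ℝ)
    (u u0 : H)
    (hu : ∀ v, B u v = F v)
    (hu0 : ∀ v, B0 u0 v = F v)
    (D : H → H → ℝ) (hD : ∀ g v, D g v = B g v - B0 g v)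
    (hDpsd : ∀ v, 0 ≤ D v v) :
    Real.sqrt (B (u - u0) (u - u0)) ≤ Real.sqrt (D u0 u0) := by
  apply Real.sqrt_le_sqrt
  -- With `e = u - u0`, subtracting the two equations gives `B e v = -D u0 v`, whence
  -- `D u0 u0 - B e e = D u u + B0 e e`, and both terms on the right are nonnegative.
  have hDu := hDpsd u
  have hB0e := hB0psd (u - u0)
  rw [hD] at hDu ⊢
  simp only [map_sub, LinearMap.sub_apply] at hB0e ⊢
  linarith [hu u0, hu0 u0, hu u, hu0 u, hBsymm u u0, hB0symm u u0]
end

section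
/- Assume B0 is positive semidefinite (B0(v,v) ≥ 0 for all v) and the form difference D := B − B0 is positive semidefinite (D(v,v) ≥ 0 for all v). Then the energy norm of the adjoint modeling error is bounded by the computable quantity ξ_upp := √(D(w0,w0)): ‖w − w0‖_B ≤ √(D(w0,w0)). -/
/-- Upper bound for the energy norm of the adjoint modeling error. -/
theorem stmt_8
    {H : Type*} [NormedAddCommGroup H] [InnerProductSpace ℝ H]
    (B B0 : H →ₗ[ℝ] H →ₗ[ℝ] ℝ)
    (hBsymm : ∀ x y, B x y = B y x)
    (hBpos : ∀ v, v ≠ 0 → 0 < B v v)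
    (hB0symm : ∀ x y, B0 x y = B0 y x)
    (hB0psd : ∀ v, 0 ≤ B0 v v)
    (Q : H →ₗ[ℝ] ℝ)
    (w w0 : H)
    (hw : ∀ v, B v w = Q v)
    (hw0 : ∀ v, B0 v w0 = Q v)
    (D : H → H → ℝ) (hD : ∀ g v, D g v = B g v - B0 g v)
    (hDpsd : ∀ v, 0 ≤ D v v) :
    Real.sqrt (B (w - w0) (w - w0)) ≤ Real.sqrt (D w0 w0) := by
  -- After expansion the claim reads `B w w ≤ B0 w0 w0`. It is the sum of `0 ≤ D w w` and
  -- `0 ≤ B0 (w - w0) (w - w0)`, since `B0 w w0 = Q w = B w w`.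
  apply Real.sqrt_le_sqrt
  have h1 := hDpsd w
  have h2 := hB0psd (w - w0)
  have h3 := (hw w).trans (hw0 w).symm
  have h4 := (hw w0).trans (hw0 w0).symm
  have h5 := hBsymm w w0
  have h6 := hB0symm w w0
  rw [hD] at h1 ⊢
  simp only [map_sub, LinearMap.sub_apply] at h2 ⊢
  linarith
end

section
/- Assume B0 is positive semidefinite (B0(v,v) ≥ 0 for all v) and the form difference D := B − B0 is positive semidefinite (D(v,v) ≥ 0 for all v). Then the computable correction R(w0) estimates the error in the quantity of interest up to the product of the computable bounds: |Q(u) − Q(u0) − R(w0)| ≤ √(D(u0,u0)) · √(D(w0,w0)). -/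
/-!
Put `e = u - u0` and `ε = w - w0`. Then `Q u - Q u0 - R w0 = B e ε`, so the Cauchy-Schwarz
inequality for `B` reduces the claim to the energy bounds `B e e ≤ D u0 u0` and `B ε ε ≤ D w0 w0`.
Both are instances of `energy_error_le`: since `B e v = -D u0 v` for all `v`, expanding
`0 ≤ D (u0 + e) (u0 + e)` gives `2 * B e e ≤ D u0 u0 + D e e`, and `D e e ≤ B e e` because `B0` is
positive semidefinite.
-/

/-- If `x` solves the `B`-problem whose right-hand side is `B0 x0`, then the energy of `x - x0` is
bounded by the form difference at `x0`. -/
lemma energy_error_le {H : Type*} [AddCommGroup H] [Module ℝ H]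
    (B B0 : H →ₗ[ℝ] H →ₗ[ℝ] ℝ)
    (hBsymm : ∀ x y, B x y = B y x) (hB0symm : ∀ x y, B0 x y = B0 y x)
    (hB0psd : ∀ v, 0 ≤ B0 v v) (hDpsd : ∀ v, 0 ≤ B v v - B0 v v)
    (x x0 : H) (hx : ∀ v, B x v = B0 x0 v) :
    B (x - x0) (x - x0) ≤ B x0 x0 - B0 x0 x0 := by
  have h1 := hDpsd x
  have h2 := hB0psd (x - x0)
  have h3 := hx x
  have h4 := hx x0
  have h5 := hBsymm x x0
  have h6 := hB0symm x x0
  simp only [map_sub, LinearMap.sub_apply] at h2 ⊢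
  linarith


/-- The computable correction `R(w0)` estimates the error in the
quantity of interest up to the product of the computable bounds. -/
theorem stmt_9
    {H : Type*} [NormedAddCommGroup H] [InnerProductSpace ℝ H]
    (B B0 : H →ₗ[ℝ] H →ₗ[ℝ] ℝ)
    (hBsymm : ∀ x y, B x y = B y x)
    (hBpos : ∀ v, v ≠ 0 → 0 < B v v)
    (hB0symm : ∀ x y, B0 x y = B0 y x)
    (hB0psd : ∀ v, 0 ≤ B0 v v)
    (F Q : H →ₗ[ℝ] ℝ)
    (u u0 w w0 : H)
    (hu : ∀ v, B u v = F v)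
    (hu0 : ∀ v, B0 u0 v = F v)
    (hw : ∀ v, B v w = Q v)
    (hw0 : ∀ v, B0 v w0 = Q v)
    (D : H → H → ℝ) (hD : ∀ g v, D g v = B g v - B0 g v)
    (hDpsd : ∀ v, 0 ≤ D v v)
    (R : H → ℝ) (hR : ∀ v, R v = F v - B u0 v) :
    |Q u - Q u0 - R w0| ≤ Real.sqrt (D u0 u0) * Real.sqrt (D w0 w0) := by
  have he := energy_error_le B B0 hBsymm hB0symm hB0psd
    (fun v => hD v v ▸ hDpsd v) u u0 (fun v => by rw [hu, hu0])
  have hε := energy_error_le B B0 hBsymm hB0symm hB0psd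
    (fun v => hD v v ▸ hDpsd v) w w0 (fun v => by rw [hBsymm, hw, hB0symm, hw0])
  have hBnn : ∀ v, 0 ≤ B v v := fun v => by
    linarith [hB0psd v, hDpsd v, hD v v]
  have hid : Q u - Q u0 - R w0 = B (u - u0) (w - w0) := by
    rw [hR, ← hu, ← hw, ← hw]
    simp only [map_sub, LinearMap.sub_apply]
  have hcs : B (u - u0) (w - w0) ^ 2
      ≤ B (u - u0) (u - u0) * B (w - w0) (w - w0) :=
    LinearMap.BilinForm.apply_sq_le_of_symm B hBnn ⟨hBsymm⟩ _ _
  rw [← hD] at he hε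
  rw [hid, ← Real.sqrt_mul (hDpsd u0)]
  exact Real.abs_le_sqrt (hcs.trans (mul_le_mul he hε (hBnn _) (hDpsd u0)))
end

section
/- The allocation M_l* := ε⁻² · √(V_l / W_l) · Σ_{k=1}^L √(V_k W_k) satisfies the statistical constraint with equality, Σ_{l=1}^L V_l / M_l* = ε², its total cost is Σ_{l=1}^L M_l* W_l = ε⁻² ( Σ_{l=1}^L √(V_l W_l) )², and it is optimal: for every choice of positive real numbers M_1,…,M_L with Σ_{l=1}^L V_l / M_l ≤ ε², the total cost satisfies Σ_{l=1}^L M_l W_l ≥ ε⁻² ( Σ_{l=1}^L √(V_l W_l) )². -/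
/-!
The optimal allocation is the equality case of the Cauchy-Schwarz inequality
`(∑ √(V_l W_l))² ≤ (∑ V_l / M_l) (∑ M_l W_l)`, which holds because
`V_l W_l = (V_l / M_l) (M_l W_l)`; bounding the first factor by `ε²` gives the lower bound on the
cost. For the allocation itself, `√(V_l / W_l) W_l = √(V_l W_l)` and
`V_l / √(V_l / W_l) = √(V_l W_l)`, so with `S = ∑ √(V_k W_k)` both the error and the cost are
constant multiples of `S`.
-/

/-- Optimality of the MLMC sample allocation
`M_l* = ε⁻² √(V_l/W_l) Σ_k √(V_k W_k)`. -/
theorem stmt_12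
    (L : ℕ) (hL : 0 < L)
    (V W : Fin L → ℝ) (hV : ∀ l, 0 < V l) (hW : ∀ l, 0 < W l)
    (ε : ℝ) (hε : 0 < ε)
    (Mstar : Fin L → ℝ)
    (hMstar : ∀ l, Mstar l =
      ε⁻¹ ^ 2 * Real.sqrt (V l / W l) * ∑ k, Real.sqrt (V k * W k)) :
    (∑ l, V l / Mstar l = ε ^ 2) ∧
    (∑ l, Mstar l * W l = ε⁻¹ ^ 2 * (∑ l, Real.sqrt (V l * W l)) ^ 2) ∧
    (∀ M : Fin L → ℝ, (∀ l, 0 < M l) → (∑ l, V l / M l ≤ ε ^ 2) →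
      ε⁻¹ ^ 2 * (∑ l, Real.sqrt (V l * W l)) ^ 2 ≤ ∑ l, M l * W l) := by
  have hS : 0 < ∑ k, Real.sqrt (V k * W k) := by
    have : Nonempty (Fin L) := ⟨⟨0, hL⟩⟩
    exact Finset.sum_pos (fun k _ => Real.sqrt_pos.2 (mul_pos (hV k) (hW k)))
      Finset.univ_nonempty
  refine ⟨?_, ?_, fun M hM hc => ?_⟩
  · have h : ∀ l, V l / Mstar l =
        ε ^ 2 / (∑ k, Real.sqrt (V k * W k)) * Real.sqrt (V l * W l) := by
      intro l
      have ha := Real.sqrt_pos.2 (hV l)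
      have hb := Real.sqrt_pos.2 (hW l)
      rw [hMstar l, Real.sqrt_div (hV l).le, Real.sqrt_mul (hV l).le (W l)]
      nth_rewrite 1 [← Real.sq_sqrt (hV l).le]
      field_simp
    rw [Finset.sum_congr rfl fun l _ => h l, ← Finset.mul_sum]
    field_simp
  · have h : ∀ l, Mstar l * W l =
        ε⁻¹ ^ 2 * (∑ k, Real.sqrt (V k * W k)) * Real.sqrt (V l * W l) := by
      intro l
      have hb := Real.sqrt_pos.2 (hW l)
      rw [hMstar l, Real.sqrt_div (hV l).le, Real.sqrt_mul (hV l).le (W l)]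
      have hw := Real.sq_sqrt (hW l).le
      field_simp
      rw [hw]
    rw [Finset.sum_congr rfl fun l _ => h l, ← Finset.mul_sum]
    ring
  · have hcs : (∑ l, Real.sqrt (V l * W l)) ^ 2 ≤ (∑ l, V l / M l) * ∑ l, M l * W l := by
      refine Finset.sum_sq_le_sum_mul_sum_of_sq_le_mul _
        (fun l _ => (div_pos (hV l) (hM l)).le) (fun l _ => (mul_pos (hM l) (hW l)).le)
        (fun l _ => ?_)
      have := hM l
      rw [Real.sq_sqrt (mul_pos (hV l) (hW l)).le]
      exact le_of_eq (by field_simp)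
    have hcost : 0 ≤ ∑ l, M l * W l :=
      Finset.sum_nonneg fun l _ => (mul_pos (hM l) (hW l)).le
    rw [inv_pow, inv_mul_le_iff₀ (by positivity)]
    exact hcs.trans (mul_le_mul_of_nonneg_right hc hcost)
end

section
/- The scalar Hashin–Shtrikman bounds are ordered and lie between the two phase conductivities: min(κ_M, κ_I) ≤ κ_HSL ≤ κ_HSU ≤ max(κ_M, κ_I), where κ_HSL := κ_arith − (κ_M − κ_I)²·φ_M·φ_I / (κ_I·φ_M + κ_M·φ_I + κ_min) and κ_HSU := κ_arith − (κ_M − κ_I)²·φ_M·φ_I / (κ_I·φ_M + κ_M·φ_I + κ_max). -/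
/-!
Both bounds are the arithmetic mean minus `N / D`, where `N = (κM - κI)² φM φI ≥ 0` and the
denominators `D` differ only in the added `min κM κI` or `max κM κI`. The larger denominator removes
less, which orders the bounds, and the arithmetic mean is at most `max κM κI`, which gives the upper
estimate. For the lower one, if `κM ≤ κI` then clearing the denominator leaves the difference
`(φM κM + φI κI - κM) D - N = 2 κM φI (κI - κM) ≥ 0`, and symmetrically if `κI ≤ κM`.
-/

/-- The scalar Hashin–Shtrikman bounds are ordered and lie
between the two phase conductivities. -/
theorem stmt_14
    (κM κI φM φI : ℝ)
    (hκM : 0 < κM) (hκI : 0 < κI)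
    (hφM : 0 ≤ φM) (hφI : 0 ≤ φI) (hsum : φM + φI = 1)
    (κHSL κHSU : ℝ)
    (hHSL : κHSL = (φM * κM + φI * κI) -
      (κM - κI) ^ 2 * φM * φI / (κI * φM + κM * φI + min κM κI))
    (hHSU : κHSU = (φM * κM + φI * κI) -
      (κM - κI) ^ 2 * φM * φI / (κI * φM + κM * φI + max κM κI)) :
    min κM κI ≤ κHSL ∧ κHSL ≤ κHSU ∧ κHSU ≤ max κM κI := by
  have hmin : 0 < min κM κI := lt_min hκM hκI
  have hmm : min κM κI ≤ max κM κI := min_le_max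
  have hB : 0 ≤ κI * φM + κM * φI := by positivity
  have hN : 0 ≤ (κM - κI) ^ 2 * φM * φI := by positivity
  subst hHSL hHSU
  refine ⟨?_, ?_, ?_⟩
  · rw [le_sub_comm, div_le_iff₀ (by linarith)]
    obtain rfl : φM = 1 - φI := by linarith
    rcases le_total κM κI with h | h
    · rw [min_eq_left h]
      have := mul_nonneg (mul_nonneg hκM.le hφI) (sub_nonneg.2 h)
      linear_combination 2 * this
    · rw [min_eq_right h]
      have := mul_nonneg (mul_nonneg hκI.le hφM) (sub_nonneg.2 h)
      linear_combination 2 * this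
  · gcongr
  · have hdiv := div_nonneg hN
      (show 0 ≤ κI * φM + κM * φI + max κM κI by linarith)
    have h1 := mul_le_mul_of_nonneg_left (le_max_left κM κI) hφM
    have h2 := mul_le_mul_of_nonneg_left (le_max_right κM κI) hφI
    have h3 : φM * max κM κI + φI * max κM κI = max κM κI := by
      rw [← add_mul, hsum, one_mul]
    linarith
end

section
/- The Hashin–Shtrikman bounds for the bulk modulus in dimension d are ordered and lie between the two phase bulk moduli: min(K_M, K_I) ≤ K_LHS ≤ K_UHS ≤ max(K_M, K_I), where K_LHS := K_arith − (K_M − K_I)²·φ_I·φ_M / (K_I·φ_M + K_M·φ_I + (2(d−1)/d)·μ_min) and K_UHS := K_arith − (K_M − K_I)²·φ_I·φ_M / (K_I·φ_M + K_M·φ_I + (2(d−1)/d)·μ_max). -/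
/-!
Both bounds have the form `K_arith - (KM - KI)² φI φM / (H + s)` with `H = KI φM + KM φI > 0` and
`s ≥ 0`. This expression increases with `s`, hence with the shear modulus, which orders the two
bounds, and it is at most `K_arith ≤ max KM KI`. It is smallest at `s = 0`, where it equals the
harmonic mean `KM KI / H`, because `K_arith * H - (KM - KI)² φI φM = KM KI`. Finally
`H ≤ max KM KI` and `min KM KI * max KM KI = KM KI` show that the harmonic mean is at least
`min KM KI`.
-/

/-- The Hashin–Shtrikman bounds for the bulk modulus in
dimension `d` are ordered and lie between the two phase bulk moduli. -/
theorem stmt_15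
    (d : ℕ) (hd : 2 ≤ d)
    (KM KI μM μI φM φI : ℝ)
    (hKM : 0 < KM) (hKI : 0 < KI) (hμM : 0 < μM) (hμI : 0 < μI)
    (hφM : 0 ≤ φM) (hφI : 0 ≤ φI) (hsum : φM + φI = 1)
    (KLHS KUHS : ℝ)
    (hLHS : KLHS = (φI * KI + φM * KM) -
      (KM - KI) ^ 2 * φI * φM /
        (KI * φM + KM * φI + 2 * ((d : ℝ) - 1) / (d : ℝ) * min μM μI))
    (hUHS : KUHS = (φI * KI + φM * KM) -
      (KM - KI) ^ 2 * φI * φM /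
        (KI * φM + KM * φI + 2 * ((d : ℝ) - 1) / (d : ℝ) * max μM μI)) :
    min KM KI ≤ KLHS ∧ KLHS ≤ KUHS ∧ KUHS ≤ max KM KI := by
  have hd' : (2 : ℝ) ≤ d := by exact_mod_cast hd
  have hc : 0 ≤ 2 * ((d : ℝ) - 1) / (d : ℝ) :=
    div_nonneg (by linarith) (by linarith)
  have hH : 0 < KI * φM + KM * φI := by
    have hmin : 0 < min KM KI := lt_min hKM hKI
    have h1 := mul_le_mul_of_nonneg_right (min_le_right KM KI) hφM
    have h2 := mul_le_mul_of_nonneg_right (min_le_left KM KI) hφI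
    have h3 : min KM KI * φM + min KM KI * φI = min KM KI := by rw [← mul_add, hsum, mul_one]
    linarith
  have hHmax : KI * φM + KM * φI ≤ max KM KI := by
    have h1 := mul_le_mul_of_nonneg_right (le_max_right KM KI) hφM
    have h2 := mul_le_mul_of_nonneg_right (le_max_left KM KI) hφI
    have h3 : max KM KI * φM + max KM KI * φI = max KM KI := by rw [← mul_add, hsum, mul_one]
    linarith
  have hAmax : φI * KI + φM * KM ≤ max KM KI := by
    have h1 := mul_le_mul_of_nonneg_left (le_max_right KM KI) hφI
    have h2 := mul_le_mul_of_nonneg_left (le_max_left KM KI) hφM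
    have h3 : φM * max KM KI + φI * max KM KI = max KM KI := by rw [← add_mul, hsum, one_mul]
    linarith
  have hN : 0 ≤ (KM - KI) ^ 2 * φI * φM := by positivity
  have hsmin : 0 ≤ 2 * ((d : ℝ) - 1) / (d : ℝ) * min μM μI :=
    mul_nonneg hc (lt_min hμM hμI).le
  have hs : 2 * ((d : ℝ) - 1) / (d : ℝ) * min μM μI ≤ 2 * ((d : ℝ) - 1) / (d : ℝ) * max μM μI :=
    mul_le_mul_of_nonneg_left min_le_max hc
  refine ⟨?_, ?_, ?_⟩
  · have hle : (KM - KI) ^ 2 * φI * φM /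
        (KI * φM + KM * φI + 2 * ((d : ℝ) - 1) / (d : ℝ) * min μM μI) ≤
        (KM - KI) ^ 2 * φI * φM / (KI * φM + KM * φI) :=
      div_le_div_of_nonneg_left hN hH (by linarith)
    have hharm : (KM - KI) ^ 2 * φI * φM / (KI * φM + KM * φI) ≤
        φI * KI + φM * KM - min KM KI := by
      rw [div_le_iff₀ hH]
      have hid : (φI * KI + φM * KM) * (KI * φM + KM * φI) - (KM - KI) ^ 2 * φI * φM =
          KM * KI := by
        obtain rfl : φM = 1 - φI := by linarith
        ring
      have hmin := mul_le_mul_of_nonneg_left hHmax (lt_min hKM hKI).le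
      rw [min_mul_max] at hmin
      linarith
    linarith
  · have hle : (KM - KI) ^ 2 * φI * φM /
        (KI * φM + KM * φI + 2 * ((d : ℝ) - 1) / (d : ℝ) * max μM μI) ≤
        (KM - KI) ^ 2 * φI * φM /
        (KI * φM + KM * φI + 2 * ((d : ℝ) - 1) / (d : ℝ) * min μM μI) :=
      div_le_div_of_nonneg_left hN (by linarith) (by linarith)
    linarith
  · have hnn : 0 ≤ (KM - KI) ^ 2 * φI * φM /
        (KI * φM + KM * φI + 2 * ((d : ℝ) - 1) / (d : ℝ) * max μM μI) :=
      div_nonneg hN (by linarith)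
    linarith
end
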